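/- Let n ≥ 1 be an integer, δ ∈ (0, n] and α ∈ (0, 1). There exists a constant c > 0, depending only on n, δ and α, such that for every f ∈ L¹_loc(ℝⁿ, ℋ^δ_∞) with M_{ℋ^δ_∞} f(x) < ∞ for ℋ^δ_∞-a.e. x ∈ ℝⁿ, one has for every cube Q₀ of ℝⁿ: (1/ℋ^δ_∞(Q₀)) ∫_{Q₀} (M_{ℋ^δ_∞} f)^α dℋ^δ_∞ ≤ c · inf_{x ∈ Q₀} (M_{ℋ^δ_∞} f(x))^α; consequently M_{ℋ^δ_∞}((M_{ℋ^δ_∞} f)^α)(x) ≤ c · (M_{ℋ^δ_∞} f(x))^α for every x ∈ ℝⁿ. -/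

import Mathlib

open scoped ENNReal
open Set MeasureTheory

noncomputable section

/-- An axis-parallel cube in `ℝⁿ`, described by its lower corner and positive side length. -/
structure Cube (n : ℕ) where
  corner : Fin n → ℝ
  side : ℝ
  side_pos : 0 < side

namespace Cube

/-- The half-open cube `∏ᵢ [cornerᵢ, cornerᵢ + side)` as a set of points. -/
def toSet {n : ℕ} (Q : Cube n) : Set (Fin n → ℝ) :=
  {x | ∀ i, Q.corner i ≤ x i ∧ x i < Q.corner i + Q.side}

/-- A cube is dyadic if it has the form `2^k·(z + [0,1)ⁿ)` with `k ∈ ℤ`, `z ∈ ℤⁿ`. -/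
def IsDyadic {n : ℕ} (Q : Cube n) : Prop :=
  ∃ (k : ℤ) (z : Fin n → ℤ), Q.side = (2:ℝ) ^ k ∧ ∀ i, Q.corner i = (z i : ℝ) * (2:ℝ) ^ k

/-- `Q'` is a dyadic subcube of `Q`, i.e. obtained from `Q` by repeated bisection. -/
def IsDyadicSubcube {n : ℕ} (Q' Q : Cube n) : Prop :=
  ∃ (k : ℕ) (z : Fin n → ℕ), (∀ i, z i < 2 ^ k) ∧
    Q'.side = Q.side / 2 ^ k ∧ ∀ i, Q'.corner i = Q.corner i + (z i : ℝ) * (Q.side / 2 ^ k)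

/-- The concentric dilate `t·Q` of a cube. -/
def dilate {n : ℕ} (Q : Cube n) (t : ℝ) (ht : 0 < t) : Cube n :=
  ⟨fun i => Q.corner i + Q.side / 2 - t * Q.side / 2, t * Q.side, mul_pos ht Q.side_pos⟩

end Cube

/-- The Hausdorff content `ℋ^δ_∞`. -/
def hContent (n : ℕ) (δ : ℝ) (E : Set (Fin n → ℝ)) : ℝ≥0∞ :=
  ⨅ (Qs : ℕ → Cube n) (_ : E ⊆ ⋃ i, (Qs i).toSet), ∑' i, ENNReal.ofReal ((Qs i).side ^ δ)

/-- The dyadic Hausdorff content `~ℋ^δ_∞`. -/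
def dContent (n : ℕ) (δ : ℝ) (E : Set (Fin n → ℝ)) : ℝ≥0∞ :=
  ⨅ (Qs : ℕ → Cube n) (_ : (∀ i, (Qs i).IsDyadic) ∧ E ⊆ ⋃ i, (Qs i).toSet),
    ∑' i, ENNReal.ofReal ((Qs i).side ^ δ)

/-- The Choquet integral `∫_E f dℋ^δ_∞`. -/
def integH (n : ℕ) (δ : ℝ) (f : (Fin n → ℝ) → ℝ) (E : Set (Fin n → ℝ)) : ℝ≥0∞ :=
  ∫⁻ t in Ioi (0:ℝ), hContent n δ {x | x ∈ E ∧ t < f x}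

/-- The Choquet integral `∫_E f d~ℋ^δ_∞` w.r.t. the dyadic Hausdorff content. -/
def integD (n : ℕ) (δ : ℝ) (f : (Fin n → ℝ) → ℝ) (E : Set (Fin n → ℝ)) : ℝ≥0∞ :=
  ∫⁻ t in Ioi (0:ℝ), dContent n δ {x | x ∈ E ∧ t < f x}

/-- A property holds `ℋ^δ_∞`-a.e. -/
def AEContent (n : ℕ) (δ : ℝ) (P : (Fin n → ℝ) → Prop) : Prop :=
  hContent n δ {x | ¬ P x} = 0

/-- `ℋ^δ_∞`-quasicontinuity. -/
def QuasiCont (n : ℕ) (δ : ℝ) (f : (Fin n → ℝ) → ℝ) : Prop :=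
  ∀ ε : ℝ, 0 < ε → ∃ O : Set (Fin n → ℝ),
    IsOpen O ∧ hContent n δ O < ENNReal.ofReal ε ∧ ContinuousOn f Oᶜ

/-- `L¹_loc(ℝⁿ, ℋ^δ_∞)`. -/
def MemL1loc (n : ℕ) (δ : ℝ) (f : (Fin n → ℝ) → ℝ) : Prop :=
  QuasiCont n δ f ∧ ∀ K : Set (Fin n → ℝ), IsCompact K → integH n δ (fun x => |f x|) K < ⊤

/-- `L^∞(ℝⁿ, ℋ^δ_∞)`. -/
def MemLinf (n : ℕ) (δ : ℝ) (f : (Fin n → ℝ) → ℝ) : Prop :=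
  QuasiCont n δ f ∧ ∃ M : ℝ, AEContent n δ (fun x => |f x| ≤ M)

/-- The `BMO(ℝⁿ, ℋ^δ_∞)` seminorm. -/
def bmoNorm (n : ℕ) (δ : ℝ) (f : (Fin n → ℝ) → ℝ) : ℝ≥0∞ :=
  ⨆ Q : Cube n, ⨅ c : ℝ,
    integH n δ (fun x => |f x - c|) Q.toSet / hContent n δ Q.toSet

/-- Membership in `BMO(ℝⁿ, ℋ^δ_∞)`. -/
def MemBMO (n : ℕ) (δ : ℝ) (f : (Fin n → ℝ) → ℝ) : Prop :=
  MemL1loc n δ f ∧ bmoNorm n δ f < ⊤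

/-- `essinf_{x ∈ Q} f := inf {t ∈ (0,∞) : ℋ^δ_∞({x ∈ Q : f x < t}) > 0}`. -/
def essInfQ (n : ℕ) (δ : ℝ) (f : (Fin n → ℝ) → ℝ) (Q : Cube n) : ℝ :=
  sInf {t : ℝ | 0 < t ∧ 0 < hContent n δ {x | x ∈ Q.toSet ∧ f x < t}}

/-- The `BLO(ℝⁿ, ℋ^δ_∞)` seminorm. -/
def bloNorm (n : ℕ) (δ : ℝ) (f : (Fin n → ℝ) → ℝ) : ℝ≥0∞ :=
  ⨆ Q : Cube n,
    integH n δ (fun x => |f x - essInfQ n δ f Q|) Q.toSet / hContent n δ Q.toSet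

/-- Membership in `BLO(ℝⁿ, ℋ^δ_∞)`. -/
def MemBLO (n : ℕ) (δ : ℝ) (f : (Fin n → ℝ) → ℝ) : Prop :=
  MemL1loc n δ f ∧ bloNorm n δ f < ⊤

/-- A weight: locally Choquet-integrable, quasicontinuous, positive `ℋ^δ_∞`-a.e. -/
def IsWeight (n : ℕ) (δ : ℝ) (w : (Fin n → ℝ) → ℝ) : Prop :=
  MemL1loc n δ w ∧ AEContent n δ (fun x => 0 < w x)

/-- The capacitary Muckenhoupt `A_{p,δ}` constant, for `p > 1`. -/
def apConst (n : ℕ) (δ p : ℝ) (w : (Fin n → ℝ) → ℝ) : ℝ≥0∞ :=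
  ⨆ Q : Cube n,
    (integH n δ w Q.toSet / hContent n δ Q.toSet) *
      (integH n δ (fun x => w x ^ (-(1 / (p - 1)))) Q.toSet / hContent n δ Q.toSet) ^ (p - 1)

/-- Membership in `A_{p,δ}`, `p > 1`. -/
def MemAp (n : ℕ) (δ p : ℝ) (w : (Fin n → ℝ) → ℝ) : Prop :=
  IsWeight n δ w ∧ apConst n δ p w < ⊤

/-- The Hardy–Littlewood maximal operator w.r.t. `ℋ^δ_∞`. -/
def maxOp (n : ℕ) (δ : ℝ) (g : (Fin n → ℝ) → ℝ) (x : Fin n → ℝ) : ℝ≥0∞ :=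
  ⨆ (Q : Cube n) (_ : x ∈ Q.toSet),
    integH n δ (fun y => |g y|) Q.toSet / hContent n δ Q.toSet

/-- The capacitary `A_{1,δ}` constant. -/
def a1Const (n : ℕ) (δ : ℝ) (w : (Fin n → ℝ) → ℝ) : ℝ≥0∞ :=
  sInf {c : ℝ≥0∞ | 0 < c ∧
    AEContent n δ (fun x => maxOp n δ w x ≤ c * ENNReal.ofReal (w x))}

/-- Membership in `A_{1,δ}`. -/
def MemA1 (n : ℕ) (δ : ℝ) (w : (Fin n → ℝ) → ℝ) : Prop :=
  IsWeight n δ w ∧ a1Const n δ w < ⊤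

/-- The `A_{p,δ}` constant for `p ∈ [1,∞)` (it is the `A_{1,δ}` constant when `p = 1`). -/
def apConstGen (n : ℕ) (δ p : ℝ) (w : (Fin n → ℝ) → ℝ) : ℝ≥0∞ :=
  if p = 1 then a1Const n δ w else apConst n δ p w

/-- Membership in `A_{p,δ}` for `p ∈ [1,∞)` (meaning `A_{1,δ}` when `p = 1`). -/
def MemApGen (n : ℕ) (δ p : ℝ) (w : (Fin n → ℝ) → ℝ) : Prop :=
  IsWeight n δ w ∧ apConstGen n δ p w < ⊤

/-- The weighted `BMO^q_w(ℝⁿ, ℋ^δ_∞)` seminorm. -/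
def bmoWNorm (n : ℕ) (δ q : ℝ) (w f : (Fin n → ℝ) → ℝ) : ℝ≥0∞ :=
  ⨆ Q : Cube n, ⨅ c : ℝ,
    (integH n δ (fun x => |f x - c| ^ q * w x) Q.toSet / integH n δ w Q.toSet) ^ (1 / q)

/-- Membership in `BMO^q_w(ℝⁿ, ℋ^δ_∞)`. -/
def MemBMOw (n : ℕ) (δ q : ℝ) (w f : (Fin n → ℝ) → ℝ) : Prop :=
  QuasiCont n δ f ∧
    (∀ K : Set (Fin n → ℝ), IsCompact K → integH n δ (fun x => |f x| ^ q * w x) K < ⊤) ∧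
    bmoWNorm n δ q w f < ⊤

/-- The integral average `f_{Q,δ}` with respect to the dyadic Hausdorff content. -/
def avgQ (n : ℕ) (δ : ℝ) (f : (Fin n → ℝ) → ℝ) (Q : Cube n) : ℝ :=
  ((integD n δ f (Q.toSet ∩ {x | 0 ≤ f x})).toReal -
      (integD n δ (fun x => -f x) (Q.toSet ∩ {x | f x < 0})).toReal) /
    ((dContent n δ (Q.toSet ∩ {x | 0 ≤ f x})).toReal +
      (dContent n δ (Q.toSet ∩ {x | f x < 0})).toReal)

/-! ### The content as an outer measure -/

theorem hContent_le_tsum (n : ℕ) (δ : ℝ) (E : Set (Fin n → ℝ)) (Qs : ℕ → Cube n)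
    (h : E ⊆ ⋃ i, (Qs i).toSet) : hContent n δ E ≤ ∑' i, ENNReal.ofReal ((Qs i).side ^ δ) :=
  iInf₂_le Qs h

theorem exists_cover (n : ℕ) (δ : ℝ) (E : Set (Fin n → ℝ)) (b : ℝ≥0∞)
    (h : hContent n δ E < b) : ∃ Qs : ℕ → Cube n, E ⊆ (⋃ i, (Qs i).toSet) ∧
      ∑' i, ENNReal.ofReal ((Qs i).side ^ δ) < b := by
  unfold hContent at h
  simp only [iInf_lt_iff] at h
  obtain ⟨Qs, h1, h2⟩ := h
  exact ⟨Qs, h1, h2⟩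

theorem exists_small_cubes (n : ℕ) (δ : ℝ) (hδ : 0 < δ) (ε : ℝ≥0∞) (hε : 0 < ε) :
    ∃ Qs : ℕ → Cube n, ∑' i, ENNReal.ofReal ((Qs i).side ^ δ) < ε := by
  obtain ⟨e, he, hs⟩ := ENNReal.exists_pos_sum_of_countable hε.ne' ℕ
  refine ⟨fun i => ⟨0, (e i : ℝ) ^ δ⁻¹, Real.rpow_pos_of_pos (he i) _⟩, ?_⟩
  refine lt_of_le_of_lt (le_of_eq ?_) hs
  congr 1
  ext i
  have h0 : (0 : ℝ) ≤ (e i : ℝ) := (e i).2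
  change ENNReal.ofReal ((((e i : NNReal) : ℝ) ^ δ⁻¹) ^ δ) = _
  rw [Real.rpow_inv_rpow h0 hδ.ne', ENNReal.ofReal_coe_nnreal]

theorem hContent_mono (n : ℕ) (δ : ℝ) {E F : Set (Fin n → ℝ)} (h : E ⊆ F) :
    hContent n δ E ≤ hContent n δ F :=
  le_iInf₂ fun Qs hQ => iInf₂_le Qs (h.trans hQ)

theorem hContent_empty (n : ℕ) (δ : ℝ) (hδ : 0 < δ) : hContent n δ ∅ = 0 := by
  by_contra hne
  obtain ⟨Qs, hQ⟩ := exists_small_cubes n δ hδ _ (pos_iff_ne_zero.2 hne)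
  exact absurd (hContent_le_tsum n δ ∅ Qs (empty_subset _)) (not_le.2 hQ)

theorem hContent_iUnion_nat (n : ℕ) (δ : ℝ) (s : ℕ → Set (Fin n → ℝ)) :
    hContent n δ (⋃ i, s i) ≤ ∑' i, hContent n δ (s i) := by
  refine ENNReal.le_of_forall_pos_le_add fun ε hε hfin => ?_
  obtain ⟨e, he, hs⟩ := ENNReal.exists_pos_sum_of_countable (ε := (ε : ℝ≥0∞)) (by simpa using hε.ne') ℕ
  have hi : ∀ i, hContent n δ (s i) < hContent n δ (s i) + e i := fun i =>
    ENNReal.lt_add_right (ne_top_of_le_ne_top hfin.ne (ENNReal.le_tsum i)) (by simpa using (he i).ne')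
  choose Qs h1 h2 using fun i => exists_cover n δ _ _ (hi i)
  calc hContent n δ (⋃ i, s i)
      ≤ ∑' k, ENNReal.ofReal ((Qs (Nat.pairEquiv.symm k).1 (Nat.pairEquiv.symm k).2).side ^ δ) := by
        refine hContent_le_tsum n δ _ (fun k => Qs (Nat.pairEquiv.symm k).1 (Nat.pairEquiv.symm k).2) ?_
        intro x hx
        obtain ⟨i, hi⟩ := mem_iUnion.1 hx
        obtain ⟨j, hj⟩ := mem_iUnion.1 (h1 i hi)
        refine mem_iUnion.2 ⟨Nat.pairEquiv (i, j), ?_⟩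
        simpa using hj
    _ = ∑' p : ℕ × ℕ, ENNReal.ofReal ((Qs p.1 p.2).side ^ δ) :=
        Nat.pairEquiv.symm.tsum_eq (fun p : ℕ × ℕ => ENNReal.ofReal ((Qs p.1 p.2).side ^ δ))
    _ = ∑' i, ∑' j, ENNReal.ofReal ((Qs i j).side ^ δ) := 
        ENNReal.tsum_prod (f := fun i j => ENNReal.ofReal ((Qs i j).side ^ δ))
    _ ≤ ∑' i, (hContent n δ (s i) + e i) := ENNReal.tsum_le_tsum fun i => (h2 i).le
    _ = ∑' i, hContent n δ (s i) + ∑' i, (e i : ℝ≥0∞) := ENNReal.tsum_add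
    _ ≤ ∑' i, hContent n δ (s i) + ε := by gcongr

def hOuter (n : ℕ) (δ : ℝ) (hδ : 0 < δ) : OuterMeasure (Fin n → ℝ) where
  measureOf := hContent n δ
  empty := hContent_empty n δ hδ
  mono := hContent_mono n δ
  iUnion_nat s _ := hContent_iUnion_nat n δ s

theorem hContent_iUnion_le (n : ℕ) (δ : ℝ) (hδ : 0 < δ) {ι : Type*} [Countable ι]
    (s : ι → Set (Fin n → ℝ)) : hContent n δ (⋃ i, s i) ≤ ∑' i, hContent n δ (s i) :=
  measure_iUnion_le (μ := hOuter n δ hδ) s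

theorem hContent_union_le (n : ℕ) (δ : ℝ) (hδ : 0 < δ) (s t : Set (Fin n → ℝ)) :
    hContent n δ (s ∪ t) ≤ hContent n δ s + hContent n δ t :=
  measure_union_le (μ := hOuter n δ hδ) s t

theorem hContent_cube_le (n : ℕ) (δ : ℝ) (hδ : 0 < δ) (Q : Cube n) :
    hContent n δ Q.toSet ≤ ENNReal.ofReal (Q.side ^ δ) := by
  refine ENNReal.le_of_forall_pos_le_add fun ε hε _ => ?_
  obtain ⟨Qs, hQ⟩ := exists_small_cubes n δ hδ ε (by simpa using hε)
  refine (hContent_le_tsum n δ _ (fun k => Nat.casesOn k Q Qs) ?_).trans ?_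
  · intro x hx
    exact mem_iUnion.2 ⟨0, hx⟩
  · rw [tsum_eq_zero_add' ENNReal.summable]
    exact add_le_add le_rfl hQ.le

theorem volume_cube (n : ℕ) (Q : Cube n) :
    volume Q.toSet = ENNReal.ofReal (Q.side ^ (n : ℝ)) := by
  have : Q.toSet = pi univ fun i => Ico (Q.corner i) (Q.corner i + Q.side) := by
    ext x
    simp [Cube.toSet]
  rw [this, Real.volume_pi_Ico]
  simp [ENNReal.ofReal_pow Q.side_pos.le]

theorem le_hContent_cube (n : ℕ) (δ : ℝ) (hδ : 0 < δ) (hδn : δ ≤ n) (Q : Cube n) :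
    ENNReal.ofReal (Q.side ^ δ) ≤ hContent n δ Q.toSet := by
  refine le_iInf₂ fun Qs hQ => ?_
  by_cases hbig : ∃ i, Q.side ≤ (Qs i).side
  · obtain ⟨i, hi⟩ := hbig
    refine le_trans ?_ (ENNReal.le_tsum i)
    exact ENNReal.ofReal_le_ofReal (Real.rpow_le_rpow Q.side_pos.le hi hδ.le)
  push Not at hbig
  have h1 : ENNReal.ofReal (Q.side ^ (n : ℝ)) ≤
      ENNReal.ofReal (Q.side ^ (n - δ)) * ∑' i, ENNReal.ofReal ((Qs i).side ^ δ) := by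
    rw [← volume_cube, ← ENNReal.tsum_mul_left]
    refine (measure_mono hQ).trans ((measure_iUnion_le _).trans ?_)
    refine ENNReal.tsum_le_tsum fun i => ?_
    rw [volume_cube, ← ENNReal.ofReal_mul (by have := Q.side_pos; positivity)]
    refine ENNReal.ofReal_le_ofReal ?_
    have hp := (Qs i).side_pos
    calc (Qs i).side ^ (n : ℝ) = (Qs i).side ^ (n - δ) * (Qs i).side ^ δ := by
          rw [← Real.rpow_add hp]; ring_nf
      _ ≤ _ := by
          have hb := (hbig i).le
          have h0 : 0 ≤ n - δ := by linarith
          gcongr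
  have h2 : ENNReal.ofReal (Q.side ^ (n : ℝ)) =
      ENNReal.ofReal (Q.side ^ (n - δ)) * ENNReal.ofReal (Q.side ^ δ) := by
    rw [← ENNReal.ofReal_mul (by have := Q.side_pos; positivity), ← Real.rpow_add Q.side_pos]
    ring_nf
  rw [h2] at h1
  have hpos : 0 < Q.side ^ (n - δ) := Real.rpow_pos_of_pos Q.side_pos _
  exact (ENNReal.mul_le_mul_iff_right (by simpa using hpos) ENNReal.ofReal_ne_top).1 h1

theorem hContent_cube (n : ℕ) (δ : ℝ) (hδ : 0 < δ) (hδn : δ ≤ n) (Q : Cube n) :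
    hContent n δ Q.toSet = ENNReal.ofReal (Q.side ^ δ) :=
  le_antisymm (hContent_cube_le n δ hδ Q) (le_hContent_cube n δ hδ hδn Q)

/-! ### Layer cake sums -/

theorem lintegral_Ioi_le_sum (φ : ℝ → ℝ≥0∞) (hφ : Antitone φ) (a : ℝ) (ha : 0 < a) :
    ∫⁻ t in Ioi a, φ t ≤ ∑' k : ℕ, ENNReal.ofReal (a * 2 ^ k) * φ (a * 2 ^ k) := by
  have hsub : Ioi a ⊆ ⋃ k : ℕ, Ioc (a * 2 ^ k) (a * 2 ^ (k + 1)) := by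
    intro x hx
    have hx' : a < x := hx
    have hex : ∃ k : ℕ, x ≤ a * 2 ^ k := by
      obtain ⟨k, hk⟩ := pow_unbounded_of_one_lt (x / a) (one_lt_two : (1 : ℝ) < 2)
      exact ⟨k, by rw [div_lt_iff₀ ha] at hk; linarith⟩
    classical
    have hs := Nat.find_spec hex
    obtain ⟨m, hm⟩ : ∃ m, Nat.find hex = m + 1 := by
      refine Nat.exists_eq_succ_of_ne_zero fun h0 => ?_
      rw [h0] at hs
      simp at hs
      linarith
    rw [hm] at hs
    refine mem_iUnion.2 ⟨m, ?_, hs⟩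
    have := Nat.find_min hex (m := m) (by omega)
    exact not_le.1 this
  refine (lintegral_mono_set hsub).trans ((lintegral_iUnion_le _ _).trans ?_)
  refine ENNReal.tsum_le_tsum fun k => ?_
  calc ∫⁻ t in Ioc (a * 2 ^ k) (a * 2 ^ (k + 1)), φ t
      ≤ ∫⁻ t in Ioc (a * 2 ^ k) (a * 2 ^ (k + 1)), φ (a * 2 ^ k) :=
        setLIntegral_mono measurable_const fun t ht => hφ ht.1.le
    _ = _ := by
        rw [setLIntegral_const, Real.volume_Ioc, mul_comm]
        congr 2
        ring

theorem sum_le_lintegral_Ioi (φ : ℝ → ℝ≥0∞) (hφ : Antitone φ) (a : ℝ) (ha : 0 < a) :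
    ∑' k : ℕ, ENNReal.ofReal (a * 2 ^ k) * φ (a * 2 ^ k) ≤ 2 * ∫⁻ t in Ioi (0 : ℝ), φ t := by
  have hd : Pairwise (Function.onFun Disjoint fun k : ℕ => Ioc (a * 2 ^ k / 2) (a * 2 ^ k)) := by
    have key : ∀ i j : ℕ, i < j → Disjoint (Ioc (a * 2 ^ i / 2) (a * 2 ^ i))
        (Ioc (a * 2 ^ j / 2) (a * 2 ^ j)) := by
      intro i j hij
      rw [Set.disjoint_left]
      intro x hx hx'
      have h1 : (2 : ℝ) ^ (i + 1) ≤ 2 ^ j := pow_le_pow_right₀ (by norm_num) hij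
      have h2 : a * 2 ^ (i + 1) ≤ a * 2 ^ j := by gcongr
      rw [pow_succ] at h2
      have := hx.2
      have := hx'.1
      linarith
    intro i j hij
    rcases lt_or_gt_of_ne hij with h | h
    · exact key i j h
    · exact (key j i h).symm
  calc ∑' k : ℕ, ENNReal.ofReal (a * 2 ^ k) * φ (a * 2 ^ k)
      ≤ ∑' k : ℕ, 2 * ∫⁻ t in Ioc (a * 2 ^ k / 2) (a * 2 ^ k), φ t := by
        refine ENNReal.tsum_le_tsum fun k => ?_
        calc ENNReal.ofReal (a * 2 ^ k) * φ (a * 2 ^ k)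
            = 2 * ∫⁻ t in Ioc (a * 2 ^ k / 2) (a * 2 ^ k), φ (a * 2 ^ k) := by
              rw [setLIntegral_const, Real.volume_Ioc, mul_comm (φ _), ← mul_assoc]
              congr 1
              rw [← ENNReal.ofReal_ofNat, ← ENNReal.ofReal_mul (by norm_num)]
              congr 1
              ring
          _ ≤ _ := by
              gcongr 2 * ?_
              exact setLIntegral_mono' measurableSet_Ioc fun t ht => hφ ht.2
    _ = 2 * ∫⁻ t in ⋃ k : ℕ, Ioc (a * 2 ^ k / 2) (a * 2 ^ k), φ t := by
        rw [ENNReal.tsum_mul_left, lintegral_iUnion (fun _ => measurableSet_Ioc) hd]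
    _ ≤ _ := by
        gcongr 2 * ?_
        refine lintegral_mono_set (iUnion_subset fun k x hx => ?_)
        have : 0 < a * 2 ^ k / 2 := by positivity
        exact lt_trans this hx.1

theorem antitone_level (n : ℕ) (δ : ℝ) (f : (Fin n → ℝ) → ℝ) (E : Set (Fin n → ℝ)) :
    Antitone fun t : ℝ => hContent n δ {x | x ∈ E ∧ t < f x} := fun _ _ h =>
  hContent_mono n δ fun _ hx => ⟨hx.1, lt_of_le_of_lt h hx.2⟩

theorem integH_mono_set (n : ℕ) (δ : ℝ) (f : (Fin n → ℝ) → ℝ) {E F : Set (Fin n → ℝ)}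
    (h : E ⊆ F) : integH n δ f E ≤ integH n δ f F :=
  lintegral_mono fun _ => hContent_mono n δ fun _ hx => ⟨h hx.1, hx.2⟩

/-! ### Weak type estimate -/

/-- The tripled cube. -/
def tripCube {n : ℕ} (P : Cube n) : Cube n :=
  ⟨fun i => P.corner i - P.side, 3 * P.side, by have := P.side_pos; positivity⟩

theorem subset_tripCube {n : ℕ} (P Q : Cube n) (h : (P.toSet ∩ Q.toSet).Nonempty)
    (hs : Q.side ≤ P.side) : Q.toSet ⊆ (tripCube P).toSet := by
  obtain ⟨z, hzP, hzQ⟩ := h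
  intro x hx i
  have h1 := hzP i
  have h2 := hzQ i
  have h3 := hx i
  simp only [tripCube]
  constructor <;> linarith

theorem self_subset_tripCube {n : ℕ} (P : Cube n) : P.toSet ⊆ (tripCube P).toSet := by
  intro x hx i
  have h3 := hx i
  have := P.side_pos
  simp only [tripCube]
  constructor <;> linarith

theorem corner_mem_ball {n : ℕ} (P Q : Cube n) (x : Fin n → ℝ) (hx : x ∈ Q.toSet)
    (h : (P.toSet ∩ Q.toSet).Nonempty) (hs : P.side ≤ Q.side) :
    P.corner ∈ Metric.closedBall x (2 * Q.side) := by
  obtain ⟨z, hzP, hzQ⟩ := h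
  have := Q.side_pos
  rw [Metric.mem_closedBall, dist_pi_le_iff (by positivity)]
  intro i
  have h1 := hzP i
  have h2 := hzQ i
  have h3 := hx i
  rw [Real.dist_eq, abs_le]
  constructor <;> linarith

theorem hContent_closedBall_le (n : ℕ) (δ : ℝ) (hδ : 0 < δ) (x : Fin n → ℝ) (r : ℝ)
    (hr : 0 < r) :
    hContent n δ (Metric.closedBall x (5 * (2 * r))) ≤
      ENNReal.ofReal (22 ^ δ) * ENNReal.ofReal (r ^ δ) := by
  let C : Cube n := ⟨fun i => x i - 11 * r, 22 * r, by positivity⟩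
  have hsub : Metric.closedBall x (5 * (2 * r)) ⊆ C.toSet := by
    intro y hy i
    rw [Metric.mem_closedBall, dist_pi_le_iff (by positivity)] at hy
    have := hy i
    rw [Real.dist_eq, abs_le] at this
    simp only [C]
    constructor <;> linarith
  refine (hContent_mono n δ hsub).trans ((hContent_cube_le n δ hδ C).trans ?_)
  rw [← ENNReal.ofReal_mul (by positivity), ← Real.mul_rpow (by norm_num) hr.le]

/-- Abstract covering lemma for a fractional maximal function of a measure. -/
theorem vitali_content (n : ℕ) (δ : ℝ) (hδ : 0 < δ) (μ : Measure (Fin n → ℝ)) (a : ℝ≥0∞)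
    (ha : a ≠ 0) (ha' : a ≠ ⊤) (L : ℝ) (G : Set (Fin n → ℝ))
    (hG : ∀ x ∈ G, ∃ r : ℝ, 0 < r ∧ r ≤ L ∧
      a * ENNReal.ofReal (r ^ δ) ≤ μ (Metric.closedBall x (2 * r))) :
    hContent n δ G ≤ ENNReal.ofReal (22 ^ δ) * (μ univ / a) := by
  choose! r hr0 hrL hrμ using hG
  obtain ⟨u, huG, hud, hcov⟩ :=
    Vitali.exists_disjoint_subfamily_covering_enlargement_closedBall G (fun x => x)
      (fun x => 2 * r x) (2 * L) (fun x hx => by have := hrL x hx; linarith) 5 (by norm_num)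
  have hcount : u.Countable := hud.countable_of_nonempty_interior fun x hx => by
    have : (Metric.ball x (2 * r x)).Nonempty :=
      Metric.nonempty_ball.2 (by have := hr0 x (huG hx); positivity)
    exact this.mono Metric.ball_subset_interior_closedBall
  have : Countable u := hcount.to_subtype
  have hsub : G ⊆ ⋃ b : u, Metric.closedBall (b : Fin n → ℝ) (5 * (2 * r b)) := by
    intro x hx
    obtain ⟨b, hb, hxb⟩ := hcov x hx
    exact mem_iUnion.2 ⟨⟨b, hb⟩, hxb (Metric.mem_closedBall_self (by have := hr0 x hx; positivity))⟩
  calc hContent n δ G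
      ≤ ∑' b : u, hContent n δ (Metric.closedBall (b : Fin n → ℝ) (5 * (2 * r b))) :=
        (hContent_mono n δ hsub).trans (hContent_iUnion_le n δ hδ _)
    _ ≤ ∑' b : u, ENNReal.ofReal (22 ^ δ) *
          (μ (Metric.closedBall (b : Fin n → ℝ) (2 * r b)) / a) := by
        refine ENNReal.tsum_le_tsum fun b => ?_
        refine (hContent_closedBall_le n δ hδ _ _ (hr0 b (huG b.2))).trans ?_
        gcongr
        rw [ENNReal.le_div_iff_mul_le (Or.inl ha) (Or.inl ha'), mul_comm]
        exact hrμ b (huG b.2)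
    _ = ENNReal.ofReal (22 ^ δ) *
          ((∑' b : u, μ (Metric.closedBall (b : Fin n → ℝ) (2 * r b))) / a) := by
        rw [ENNReal.tsum_mul_left]
        simp only [div_eq_mul_inv]
        rw [ENNReal.tsum_mul_right]
    _ ≤ _ := by
        gcongr
        refine (tsum_meas_le_meas_iUnion_of_disjoint μ (fun _ => measurableSet_closedBall) ?_).trans
          (measure_mono (subset_univ _))
        intro b c hbc
        exact hud b.2 c.2 (fun h => hbc (Subtype.ext h))

theorem integH_split (n : ℕ) (δ : ℝ) (hδ : 0 < δ) (g : (Fin n → ℝ) → ℝ) (Q : Cube n) (a : ℝ)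
    (ha : 0 < a) :
    integH n δ g Q.toSet ≤ ENNReal.ofReal a * ENNReal.ofReal (Q.side ^ δ) +
      ∑' k : ℕ, ENNReal.ofReal (a * 2 ^ k) * hContent n δ {x | x ∈ Q.toSet ∧ a * 2 ^ k < g x} := by
  unfold integH
  rw [← Ioc_union_Ioi_eq_Ioi ha.le]
  refine (lintegral_union_le _ _ _).trans ?_
  refine add_le_add ?_ (lintegral_Ioi_le_sum _ (antitone_level n δ g Q.toSet) a ha)
  calc _ ≤ ∫⁻ _ in Ioc 0 a, ENNReal.ofReal (Q.side ^ δ) :=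
        lintegral_mono fun t =>
          (hContent_mono n δ (fun x hx => hx.1)).trans (hContent_cube_le n δ hδ Q)
    _ = _ := by rw [setLIntegral_const, Real.volume_Ioc, sub_zero, mul_comm]

theorem weak_type (n : ℕ) (δ : ℝ) (hδ : 0 < δ) (g : (Fin n → ℝ) → ℝ)
    (D : Set (Fin n → ℝ)) (hD : hContent n δ D ≠ ⊤) (L : ℝ) (t : ℝ) (ht : 0 < t) (S : ℝ≥0∞)
    (hS : integH n δ g D < S) :
    hContent n δ {x | ∃ Q : Cube n, x ∈ Q.toSet ∧ Q.toSet ⊆ D ∧ Q.side ≤ L ∧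
      ENNReal.ofReal t * ENNReal.ofReal (Q.side ^ δ) < integH n δ g Q.toSet} ≤
      ENNReal.ofReal (12 * 22 ^ δ) * (S / ENNReal.ofReal t) := by
  set a := t / 2 with ha_def
  have ha : 0 < a := by positivity
  set w : ℕ → ℝ≥0∞ := fun k => ENNReal.ofReal (a * 2 ^ k) with hw
  have hw0 : ∀ k, w k ≠ 0 := fun k => by
    have : 0 < a * 2 ^ k := by positivity
    simpa [hw] using this
  have hwt : ∀ k, w k ≠ ⊤ := fun k => ENNReal.ofReal_ne_top
  have hwa : ∀ k, ENNReal.ofReal a ≤ w k := fun k =>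
    ENNReal.ofReal_le_ofReal (le_mul_of_one_le_right ha.le (one_le_pow₀ (by norm_num)))
  have ha0 : ENNReal.ofReal a ≠ 0 := by simpa using ha
  set E : ℕ → Set (Fin n → ℝ) := fun k => {x | x ∈ D ∧ a * 2 ^ k < g x} with hE
  have hS0 : S ≠ 0 := (lt_of_le_of_lt zero_le hS).ne'
  obtain ⟨e, he, hes⟩ := ENNReal.exists_pos_sum_of_countable hS0 ℕ
  have hlt : ∀ k, hContent n δ (E k) < hContent n δ (E k) + e k / w k := fun k => by
    refine ENNReal.lt_add_right (ne_top_of_le_ne_top hD (hContent_mono n δ fun x hx => hx.1)) ?_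
    exact ENNReal.div_ne_zero.2 ⟨by simpa using (he k).ne', hwt k⟩
  choose P hP1 hP2 using fun k => exists_cover n δ _ _ (hlt k)
  set v : ℕ × ℕ → ℝ≥0∞ := fun p => ENNReal.ofReal ((P p.1 p.2).side ^ δ) with hv
  have htot : ∑' p : ℕ × ℕ, w p.1 * v p ≤ 3 * S := by
    rw [ENNReal.tsum_prod (f := fun i j => w i * v (i, j))]
    calc ∑' k, ∑' i, w k * v (k, i) ≤ ∑' k, (w k * hContent n δ (E k) + e k) := by
          refine ENNReal.tsum_le_tsum fun k => ?_
          rw [ENNReal.tsum_mul_left]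
          calc w k * ∑' i, v (k, i) ≤ w k * (hContent n δ (E k) + e k / w k) := by
                gcongr
                exact (hP2 k).le
            _ = _ := by rw [mul_add, ENNReal.mul_div_cancel (hw0 k) (hwt k)]
      _ = ∑' k, w k * hContent n δ (E k) + ∑' k, (e k : ℝ≥0∞) := ENNReal.tsum_add
      _ ≤ 2 * S + S := by
          refine add_le_add ?_ hes.le
          refine (sum_le_lintegral_Ioi _ (antitone_level n δ g D) a ha).trans ?_
          gcongr
          exact hS.le
      _ = 3 * S := by ring
  set A : Set (Fin n → ℝ) := ⋃ p : ℕ × ℕ, (tripCube (P p.1 p.2)).toSet with hA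
  have hAle : hContent n δ A ≤ ENNReal.ofReal (22 ^ δ) * (3 * S / ENNReal.ofReal a) := by
    calc hContent n δ A ≤ ∑' p : ℕ × ℕ, hContent n δ (tripCube (P p.1 p.2)).toSet :=
          hContent_iUnion_le n δ hδ _
      _ ≤ ∑' p : ℕ × ℕ, ENNReal.ofReal (22 ^ δ) * ((w p.1 * v p) / ENNReal.ofReal a) := by
          refine ENNReal.tsum_le_tsum fun p => ?_
          refine (hContent_cube_le n δ hδ _).trans ?_
          have hp := (P p.1 p.2).side_pos
          calc ENNReal.ofReal ((tripCube (P p.1 p.2)).side ^ δ)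
              ≤ ENNReal.ofReal (22 ^ δ) * v p := by
                rw [← ENNReal.ofReal_mul (by positivity), ← Real.mul_rpow (by norm_num) hp.le]
                refine ENNReal.ofReal_le_ofReal (Real.rpow_le_rpow ?_ ?_ hδ.le)
                · exact (tripCube (P p.1 p.2)).side_pos.le
                · simp only [tripCube]; linarith
            _ ≤ _ := by
                gcongr
                rw [ENNReal.le_div_iff_mul_le (Or.inl ha0) (Or.inl ENNReal.ofReal_ne_top),
                  mul_comm]
                gcongr
                exact hwa _
      _ = ENNReal.ofReal (22 ^ δ) * ((∑' p : ℕ × ℕ, w p.1 * v p) / ENNReal.ofReal a) := by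
          rw [ENNReal.tsum_mul_left]
          simp only [div_eq_mul_inv]
          rw [ENNReal.tsum_mul_right]
      _ ≤ _ := by gcongr
  set μ : Measure (Fin n → ℝ) :=
    Measure.sum fun p : ℕ × ℕ => (w p.1 * v p) • Measure.dirac (P p.1 p.2).corner with hμ
  have hμu : μ univ ≤ 3 * S := by
    rw [hμ, Measure.sum_apply _ MeasurableSet.univ]
    simpa using htot
  set G : Set (Fin n → ℝ) := {x | ∃ Q : Cube n, x ∈ Q.toSet ∧ Q.toSet ⊆ D ∧ Q.side ≤ L ∧
      ENNReal.ofReal t * ENNReal.ofReal (Q.side ^ δ) < integH n δ g Q.toSet} with hG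
  have hV : hContent n δ (G \ A) ≤ ENNReal.ofReal (22 ^ δ) * (μ univ / ENNReal.ofReal a) := by
    refine vitali_content n δ hδ μ _ ha0 ENNReal.ofReal_ne_top L _ ?_
    rintro x ⟨⟨Q, hxQ, hQD, hQL, hQt⟩, hxA⟩
    refine ⟨Q.side, Q.side_pos, hQL, ?_⟩
    set B := Metric.closedBall x (2 * Q.side) with hB
    have hsplit := integH_split n δ hδ g Q a ha
    have hta : ENNReal.ofReal t = ENNReal.ofReal a + ENNReal.ofReal a := by
      rw [← ENNReal.ofReal_add ha.le ha.le]
      congr 1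
      rw [ha_def]; ring
    have h1 : ENNReal.ofReal a * ENNReal.ofReal (Q.side ^ δ) ≤
        ∑' k : ℕ, w k * hContent n δ {x | x ∈ Q.toSet ∧ a * 2 ^ k < g x} := by
      by_contra hcon
      push Not at hcon
      have := hQt.trans_le (hsplit.trans (add_le_add le_rfl hcon.le))
      rw [hta, add_mul] at this
      exact lt_irrefl _ this
    refine h1.trans ?_
    rw [hμ, Measure.sum_apply _ measurableSet_closedBall,
      ENNReal.tsum_prod (f := fun i j =>
        ((w i * v (i, j)) • Measure.dirac (P i j).corner) B)]
    refine ENNReal.tsum_le_tsum fun k => ?_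
    simp only [Measure.smul_apply, smul_eq_mul, mul_assoc]
    rw [ENNReal.tsum_mul_left]
    gcongr
    have hsub : {x | x ∈ Q.toSet ∧ a * 2 ^ k < g x} ⊆
        ⋃ i, {y | y ∈ (P k i).toSet ∧ (P k i).corner ∈ B} := by
      rintro y ⟨hyQ, hyg⟩
      obtain ⟨i, hi⟩ := mem_iUnion.1 (hP1 k ⟨hQD hyQ, hyg⟩)
      refine mem_iUnion.2 ⟨i, hi, ?_⟩
      have hne : ((P k i).toSet ∩ Q.toSet).Nonempty := ⟨y, hi, hyQ⟩
      refine corner_mem_ball _ Q x hxQ hne ?_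
      by_contra hbig
      push Not at hbig
      exact hxA (mem_iUnion.2 ⟨(k, i), subset_tripCube _ Q hne hbig.le hxQ⟩)
    refine (hContent_mono n δ hsub).trans ((hContent_iUnion_le n δ hδ _).trans ?_)
    refine ENNReal.tsum_le_tsum fun i => ?_
    rw [Measure.dirac_apply' _ measurableSet_closedBall]
    by_cases hc : (P k i).corner ∈ B
    · rw [indicator_of_mem hc]
      simp only [hc, and_true, Pi.one_apply, mul_one]
      exact hContent_cube_le n δ hδ (P k i)
    · simp [hc, hContent_empty n δ hδ]
  calc hContent n δ G ≤ hContent n δ (A ∪ G \ A) := hContent_mono n δ (by simp)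
    _ ≤ hContent n δ A + hContent n δ (G \ A) := hContent_union_le n δ hδ _ _
    _ ≤ ENNReal.ofReal (22 ^ δ) * (3 * S / ENNReal.ofReal a) +
        ENNReal.ofReal (22 ^ δ) * (3 * S / ENNReal.ofReal a) := by
        refine add_le_add hAle (hV.trans ?_)
        gcongr
    _ = _ := by
        rw [ENNReal.ofReal_mul (by norm_num), ha_def,
          ENNReal.ofReal_div_of_pos (by norm_num : (0 : ℝ) < 2)]
        have h12 : ENNReal.ofReal 12 = 12 := by simp
        have h2 : ENNReal.ofReal 2 = 2 := by simp
        rw [h12, h2, div_eq_mul_inv (3 * S), ENNReal.inv_div (by simp) (by simp)]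
        simp only [div_eq_mul_inv]
        ring

/-! ### The main estimate -/

theorem integH_le_maxOp (n : ℕ) (δ : ℝ) (hδ : 0 < δ) (hδn : δ ≤ n) (f : (Fin n → ℝ) → ℝ)
    (Q : Cube n) (y : Fin n → ℝ) (hy : y ∈ Q.toSet) :
    integH n δ (fun x => |f x|) Q.toSet ≤ maxOp n δ f y * ENNReal.ofReal (Q.side ^ δ) := by
  have h : integH n δ (fun x => |f x|) Q.toSet / hContent n δ Q.toSet ≤ maxOp n δ f y :=
    le_iSup₂ (f := fun (Q : Cube n) (_ : y ∈ Q.toSet) =>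
      integH n δ (fun y => |f y|) Q.toSet / hContent n δ Q.toSet) Q hy
  rw [hContent_cube n δ hδ hδn] at h
  have hp : 0 < Q.side ^ δ := Real.rpow_pos_of_pos Q.side_pos _
  exact (ENNReal.div_le_iff (by simpa using hp) ENNReal.ofReal_ne_top).1 h

theorem level_bound (n : ℕ) (δ : ℝ) (hδ : 0 < δ) (hδn : δ ≤ n) (f : (Fin n → ℝ) → ℝ)
    (Q₀ : Cube n) (y : Fin n → ℝ) (hy : y ∈ Q₀.toSet) (s : ℝ) (hs : 0 < s)
    (hys : maxOp n δ f y < ENNReal.ofReal s) (u : ℝ) (hu : 3 ^ δ * s ≤ u) :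
    hContent n δ {x | x ∈ Q₀.toSet ∧ ENNReal.ofReal u < maxOp n δ f x} ≤
      ENNReal.ofReal (12 * 22 ^ δ) *
        (ENNReal.ofReal (3 ^ δ * s * Q₀.side ^ δ) / ENNReal.ofReal u) := by
  have hu0 : 0 < u := lt_of_lt_of_le (by positivity) hu
  have key : ∀ Q : Cube n, y ∈ (tripCube Q).toSet →
      integH n δ (fun x => |f x|) (tripCube Q).toSet <
        ENNReal.ofReal (3 ^ δ * s * Q.side ^ δ) := by
    intro Q hQ
    have hp : 0 < Q.side ^ δ := Real.rpow_pos_of_pos Q.side_pos _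
    have hp' : 0 < (tripCube Q).side ^ δ := Real.rpow_pos_of_pos (tripCube Q).side_pos _
    refine (integH_le_maxOp n δ hδ hδn f _ y hQ).trans_lt ?_
    have : 3 ^ δ * s * Q.side ^ δ = s * (tripCube Q).side ^ δ := by
      simp only [tripCube]
      rw [Real.mul_rpow (by norm_num) Q.side_pos.le]
      ring
    rw [this, ENNReal.ofReal_mul hs.le]
    exact (ENNReal.mul_lt_mul_iff_left (by simpa using hp') ENNReal.ofReal_ne_top).2 hys
  have hyD := self_subset_tripCube Q₀ hy
  refine le_trans (hContent_mono n δ ?_)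
    (weak_type n δ hδ (fun x => |f x|) (tripCube Q₀).toSet
      (ne_top_of_le_ne_top ENNReal.ofReal_ne_top (hContent_cube_le n δ hδ _)) Q₀.side u hu0 _
      (key Q₀ hyD))
  rintro x ⟨hxQ, hxu⟩
  unfold maxOp at hxu
  simp only [lt_iSup_iff] at hxu
  obtain ⟨Q, hxQ', hlt⟩ := hxu
  rw [hContent_cube n δ hδ hδn] at hlt
  have hp : 0 < Q.side ^ δ := Real.rpow_pos_of_pos Q.side_pos _
  have hlt' := ENNReal.mul_lt_of_lt_div hlt
  rcases le_or_gt Q.side Q₀.side with hle | hgt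
  · exact ⟨Q, hxQ', subset_tripCube Q₀ Q ⟨x, hxQ, hxQ'⟩ hle, hle, hlt'⟩
  · exfalso
    have hsub := subset_tripCube Q Q₀ ⟨x, hxQ', hxQ⟩ hgt.le
    have h1 := key Q (hsub hy)
    have h2 := hlt'.trans_le (integH_mono_set n δ (fun x => |f x|) (self_subset_tripCube Q))
    have h3 := h2.trans h1
    rw [← ENNReal.ofReal_mul hu0.le] at h3
    refine absurd h3 (not_lt.2 (ENNReal.ofReal_le_ofReal ?_))
    gcongr

theorem integral_bound (n : ℕ) (δ α : ℝ) (hδ : 0 < δ) (hδn : δ ≤ n) (hα0 : 0 < α) (hα1 : α < 1)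
    (f : (Fin n → ℝ) → ℝ)
    (Q₀ : Cube n) (y : Fin n → ℝ) (hy : y ∈ Q₀.toSet) (s : ℝ) (hs : 0 < s)
    (hys : maxOp n δ f y < ENNReal.ofReal s) :
    integH n δ (fun x => (maxOp n δ f x).toReal ^ α) Q₀.toSet ≤
      ENNReal.ofReal ((3 ^ δ) ^ α * (1 + 12 * 22 ^ δ * (α / (1 - α)))) * ENNReal.ofReal (s ^ α) *
        ENNReal.ofReal (Q₀.side ^ δ) := by
  have hp : 0 < Q₀.side ^ δ := Real.rpow_pos_of_pos Q₀.side_pos _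
  set s' := 3 ^ δ * s with hs'
  have hs'0 : 0 < s' := by positivity
  set T := s' ^ α with hT
  have hT0 : 0 < T := by positivity
  set K : ℝ := 12 * 22 ^ δ with hK
  have hK0 : 0 < K := by positivity
  have hα1' : 0 < 1 - α := by linarith
  have hinv : 1 < α⁻¹ := (one_lt_inv₀ hα0).2 hα1
  have hexp : -α⁻¹ < -1 := by linarith
  have hfirst : ∫⁻ t in Ioc 0 T,
      hContent n δ {x | x ∈ Q₀.toSet ∧ t < (maxOp n δ f x).toReal ^ α} ≤
      ENNReal.ofReal (T * Q₀.side ^ δ) := by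
    calc _ ≤ ∫⁻ _ in Ioc 0 T, ENNReal.ofReal (Q₀.side ^ δ) :=
        lintegral_mono fun t =>
          (hContent_mono n δ (fun x hx => hx.1)).trans (hContent_cube_le n δ hδ Q₀)
      _ = _ := by rw [setLIntegral_const, Real.volume_Ioc, sub_zero, mul_comm,
                    ENNReal.ofReal_mul hT0.le]
  have hsecond : ∫⁻ t in Ioi T,
      hContent n δ {x | x ∈ Q₀.toSet ∧ t < (maxOp n δ f x).toReal ^ α} ≤
      ENNReal.ofReal (K * (s' * Q₀.side ^ δ) * (-T ^ (-α⁻¹ + 1) / (-α⁻¹ + 1))) := by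
    calc _ ≤ ∫⁻ t in Ioi T, ENNReal.ofReal (K * (s' * Q₀.side ^ δ) * t ^ (-α⁻¹)) := by
          refine setLIntegral_mono' measurableSet_Ioi fun t ht => ?_
          have ht' : T < t := ht
          have ht0 : 0 < t := hT0.trans ht'
          have hu0 : 0 < t ^ α⁻¹ := by positivity
          have hu : s' ≤ t ^ α⁻¹ := by
            have h1 : T ^ α⁻¹ ≤ t ^ α⁻¹ := by gcongr
            rwa [hT, Real.rpow_rpow_inv hs'0.le hα0.ne'] at h1
          refine le_trans (hContent_mono n δ ?_)
            ((level_bound n δ hδ hδn f Q₀ y hy s hs hys (t ^ α⁻¹) hu).trans (le_of_eq ?_))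
          · rintro x ⟨hxQ, hx⟩
            refine ⟨hxQ, ?_⟩
            by_cases htop : maxOp n δ f x = ⊤
            · rw [htop]; exact ENNReal.ofReal_lt_top
            · rw [ENNReal.ofReal_lt_iff_lt_toReal hu0.le htop]
              have h1 : t ^ α⁻¹ < ((maxOp n δ f x).toReal ^ α) ^ α⁻¹ :=
                Real.rpow_lt_rpow ht0.le hx (by positivity)
              rwa [Real.rpow_rpow_inv ENNReal.toReal_nonneg hα0.ne'] at h1
          · rw [← ENNReal.ofReal_div_of_pos hu0, ← ENNReal.ofReal_mul hK0.le]
            congr 1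
            rw [Real.rpow_neg ht0.le]
            simp only [div_eq_mul_inv]
            ring
      _ = ENNReal.ofReal (∫ t in Ioi T, K * (s' * Q₀.side ^ δ) * t ^ (-α⁻¹)) := by
          rw [ofReal_integral_eq_lintegral_ofReal]
          · exact (integrableOn_Ioi_rpow_of_lt hexp hT0).const_mul _
          · refine (ae_restrict_iff' measurableSet_Ioi).2 (ae_of_all _ fun t ht => ?_)
            have ht0 : 0 < t := hT0.trans ht
            simp only [Pi.zero_apply]
            positivity
      _ = _ := by rw [integral_const_mul, integral_Ioi_rpow_of_lt hexp hT0]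
  have hval : K * (s' * Q₀.side ^ δ) * (-T ^ (-α⁻¹ + 1) / (-α⁻¹ + 1)) =
      T * Q₀.side ^ δ * (K * (α / (1 - α))) := by
    have h1 : s' * T ^ (-α⁻¹ + 1) = T := by
      rw [hT, ← Real.rpow_mul hs'0.le]
      nth_rewrite 1 [← Real.rpow_one s']
      rw [← Real.rpow_add hs'0]
      congr 1
      field_simp
      ring
    have h2 : -T ^ (-α⁻¹ + 1) / (-α⁻¹ + 1) = T ^ (-α⁻¹ + 1) * (α / (1 - α)) := by
      have h3 : -α⁻¹ + 1 = -((1 - α) / α) := by field_simp; ring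
      generalize T ^ (-α⁻¹ + 1) = Z
      rw [h3]
      field_simp
    rw [h2]
    calc _ = (s' * T ^ (-α⁻¹ + 1)) * Q₀.side ^ δ * (K * (α / (1 - α))) := by ring
      _ = _ := by rw [h1]
  unfold integH
  rw [← Ioc_union_Ioi_eq_Ioi hT0.le]
  refine (lintegral_union_le _ _ _).trans ((add_le_add hfirst hsecond).trans (le_of_eq ?_))
  rw [hval, ← ENNReal.ofReal_add (by positivity) (by positivity),
    ← ENNReal.ofReal_mul (by positivity), ← ENNReal.ofReal_mul (by positivity)]
  congr 1
  have : T = (3 ^ δ) ^ α * s ^ α := by rw [hT, hs', Real.mul_rpow (by positivity) hs.le]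
  rw [this]
  ring

theorem pointwise_bound (n : ℕ) (δ α : ℝ) (hδ : 0 < δ) (hδn : δ ≤ n) (hα0 : 0 < α) (hα1 : α < 1)
    (f : (Fin n → ℝ) → ℝ)
    (Q₀ : Cube n) (y : Fin n → ℝ) (hy : y ∈ Q₀.toSet) :
    integH n δ (fun x => (maxOp n δ f x).toReal ^ α) Q₀.toSet / hContent n δ Q₀.toSet /
      ENNReal.ofReal ((3 ^ δ) ^ α * (1 + 12 * 22 ^ δ * (α / (1 - α)))) ≤ maxOp n δ f y ^ α := by
  have hα1' : 0 < 1 - α := by linarith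
  have hc : 0 < ((3 : ℝ) ^ δ) ^ α * (1 + 12 * 22 ^ δ * (α / (1 - α))) := by positivity
  have hp : 0 < Q₀.side ^ δ := Real.rpow_pos_of_pos Q₀.side_pos _
  rw [← ENNReal.rpow_inv_le_iff hα0]
  refine le_of_forall_gt_imp_ge_of_dense fun b hb => ?_
  rcases eq_or_ne b ⊤ with rfl | hbt
  · exact le_top
  have hb0 : 0 < b.toReal := ENNReal.toReal_pos (lt_of_le_of_lt zero_le hb).ne' hbt
  rw [ENNReal.rpow_inv_le_iff hα0]
  have h := integral_bound n δ α hδ hδn hα0 hα1 f Q₀ y hy b.toReal hb0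
    (by rwa [ENNReal.ofReal_toReal hbt])
  rw [← ENNReal.ofReal_rpow_of_pos hb0, ENNReal.ofReal_toReal hbt] at h
  rw [ENNReal.div_le_iff (by simpa using hc) ENNReal.ofReal_ne_top, hContent_cube n δ hδ hδn,
    ENNReal.div_le_iff (by simpa using hp) ENNReal.ofReal_ne_top]
  rwa [mul_comm (b ^ α)]

/-- powers `α ∈ (0,1)` of the maximal function are `A_{1,δ}`-type weights. -/
theorem stmt19 (n : ℕ) (hn : 1 ≤ n) (δ α : ℝ) (hδ0 : 0 < δ) (hδn : δ ≤ n)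
    (hα0 : 0 < α) (hα1 : α < 1) :
    ∃ c : ℝ, 0 < c ∧
      ∀ f : (Fin n → ℝ) → ℝ, MemL1loc n δ f →
        AEContent n δ (fun x => maxOp n δ f x < ⊤) →
        (∀ Q₀ : Cube n,
          integH n δ (fun x => (maxOp n δ f x).toReal ^ α) Q₀.toSet /
              hContent n δ Q₀.toSet ≤
            ENNReal.ofReal c *
              ⨅ (x : Fin n → ℝ) (_ : x ∈ Q₀.toSet), maxOp n δ f x ^ α) ∧
        ∀ x : Fin n → ℝ,
          maxOp n δ (fun y => (maxOp n δ f y).toReal ^ α) x ≤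
            ENNReal.ofReal c * maxOp n δ f x ^ α := by

  have hα1' : 0 < 1 - α := by linarith
  have hc : 0 < ((3 : ℝ) ^ δ) ^ α * (1 + 12 * 22 ^ δ * (α / (1 - α))) := by positivity
  refine ⟨_, hc, fun f _ _ => ?_⟩
  have main : ∀ Q₀ : Cube n,
      integH n δ (fun x => (maxOp n δ f x).toReal ^ α) Q₀.toSet / hContent n δ Q₀.toSet ≤
        ENNReal.ofReal (((3 : ℝ) ^ δ) ^ α * (1 + 12 * 22 ^ δ * (α / (1 - α)))) *
          ⨅ (x : Fin n → ℝ) (_ : x ∈ Q₀.toSet), maxOp n δ f x ^ α := by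
    intro Q₀
    rw [mul_comm, ← ENNReal.div_le_iff (by simpa using hc) ENNReal.ofReal_ne_top]
    exact le_iInf₂ fun y hy => pointwise_bound n δ α hδ0 hδn hα0 hα1 f Q₀ y hy
  refine ⟨main, fun x => ?_⟩
  conv_lhs => unfold maxOp
  refine iSup₂_le fun Q hQ => ?_
  have habs : (fun y => |(maxOp n δ f y).toReal ^ α|) =
      fun y => (maxOp n δ f y).toReal ^ α := by
    funext y
    exact abs_of_nonneg (Real.rpow_nonneg ENNReal.toReal_nonneg _)
  change integH n δ (fun y => |(maxOp n δ f y).toReal ^ α|) Q.toSet / _ ≤ _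
  rw [habs]
  refine (main Q).trans ?_
  gcongr
  exact iInf₂_le x hQ
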